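/- Let A be an arrangement of 21 lines in ℙ²(ℂ) such that every singular point of A has multiplicity 3 or 4, t_3(A) = 28, t_4(A) = 21, and every line of A contains exactly 4 triple points and exactly 4 quadruple points of A (these are exactly the properties of the Klein arrangement of 21 lines). Then there exists a supersolvable line arrangement B with A ⊆ B and |B| ≤ 41; in particular extSS(A) ≤ 20. -/

import Mathlib

/-!
Let `P` be any quadruple point of `A`, and let `B` be `A` together with all lines joining `P` to
those singular points of `A` that are not yet joined to `P` by a line of `A`. Every line of `B`
outside `A` passes through `P`, so a singular point of `B` different from `P` is either on such a
line or singular for `A`; in both cases a line of `B` joins it to `P`, and `P` is modular in `B`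
(`exists_modular_extension`).

There are `28 + 21 = 49` singular points. Each of the four lines of `A` through `P` contains
`4 + 4 - 1 = 7` of them other than `P`, and no two of these lines share a point other than `P`.
Hence `1 + 4 * 7 = 29` singular points need no new line, at most `20` lines are added, and
`|B| ≤ 41`.
-/

open scoped Classical

noncomputable section

/-- The projective plane `ℙ²(ℂ)`, used both for points and for lines
(a line being recorded by its coefficient vector, up to scalar). -/
abbrev P2 := Projectivization ℂ (Fin 3 → ℂ)

lemma vne₀ {a b c : ℂ} (h : a ≠ 0) : ![a, b, c] ≠ 0 :=
  fun hh => h (by simpa using congrFun hh 0)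

lemma vne₁ {a b c : ℂ} (h : b ≠ 0) : ![a, b, c] ≠ 0 :=
  fun hh => h (by simpa using congrFun hh 1)

lemma vne₂ {a b c : ℂ} (h : c ≠ 0) : ![a, b, c] ≠ 0 :=
  fun hh => h (by simpa using congrFun hh 2)

/-- The point (or line) of `ℙ²(ℂ)` with homogeneous coordinates `[a : b : c]`. -/
def mkP (a b c : ℂ) (h : ![a, b, c] ≠ 0) : P2 := Projectivization.mk ℂ ![a, b, c] h

/-- Incidence: the point `p` lies on the line `L`
(the line being given by its coefficient vector, up to scalar). -/
def Incid (p L : P2) : Prop := ∑ i : Fin 3, p.rep i * L.rep i = 0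

/-- The multiplicity of a point `p` with respect to the line arrangement `A`:
the number of lines of `A` passing through `p`. -/
def mult (A : Finset P2) (p : P2) : ℕ := (A.filter fun L => Incid p L).card

/-- `p` is a singular point of the arrangement `A`: it lies on at least two of its lines. -/
def IsSing (A : Finset P2) (p : P2) : Prop := 2 ≤ mult A p

/-- The set of singular points of `A`. -/
def Sing (A : Finset P2) : Set P2 := {p | IsSing A p}

/-- `tr A r` is the number of singular points of `A` of multiplicity exactly `r`. -/
def tr (A : Finset P2) (r : ℕ) : ℕ := {p : P2 | mult A p = r}.ncard

/-- `P` is a modular point of `A`: it is a singular point, and for every singular point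
`Q ≠ P` the line through `P` and `Q` belongs to `A`. -/
def IsModular (A : Finset P2) (P : P2) : Prop :=
  IsSing A P ∧ ∀ Q : P2, IsSing A Q → Q ≠ P → ∃ L ∈ A, Incid P L ∧ Incid Q L

/-- A line arrangement in `ℙ²(ℂ)` is supersolvable iff it has a modular point. -/
def Supersolvable (A : Finset P2) : Prop := ∃ P : P2, IsModular A P

/-- The extension-to-supersolvability number: the least `k` such that `A` is contained in a
supersolvable arrangement with `|A| + k` lines. -/
def extSS (A : Finset P2) : ℕ :=
  sInf {k : ℕ | ∃ B : Finset P2, A ⊆ B ∧ Supersolvable B ∧ B.card = A.card + k}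

open Projectivization in
lemma incid_iff_orthogonal (p L : P2) : Incid p L ↔ orthogonal p L := by
  conv_rhs => rw [← p.mk_rep, ← L.mk_rep]
  rw [orthogonal_mk]
  rfl

/-- Two distinct points lie on at most one common line. -/
lemma incid_line_unique {p q L M : P2} (hpq : p ≠ q) (hpL : Incid p L) (hqL : Incid q L)
    (hpM : Incid p M) (hqM : Incid q M) : L = M := by
  rw [incid_iff_orthogonal] at *
  exact (Configuration.ofField.eq_or_eq_of_orthogonal hpL hqL hpM hqM).resolve_left hpq

/-- Any two distinct points lie on a common line, given by the cross product. -/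
lemma exists_incid_line {p q : P2} (hpq : p ≠ q) : ∃ L : P2, Incid p L ∧ Incid q L := by
  refine ⟨Projectivization.cross p q, ?_, ?_⟩ <;> rw [incid_iff_orthogonal]
  · exact Projectivization.orthogonal_cross_left hpq
  · exact Projectivization.orthogonal_cross_right hpq

/-- If `U` contains every singular point of `A` that no line of `A` joins to `P`, and `P ∉ U`,
then adding at most `|U|` lines through `P` makes `P` a modular point. -/
lemma exists_modular_extension (A U : Finset P2) (P : P2) (hP : IsSing A P) (hPU : P ∉ U)
    (hU : ∀ Q, IsSing A Q → Q ≠ P → (∃ L ∈ A, Incid P L ∧ Incid Q L) ∨ Q ∈ U) :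
    ∃ B : Finset P2, A ⊆ B ∧ IsModular B P ∧ B.card ≤ A.card + U.card := by
  have hex : ∀ Q : P2, ∃ L : P2, Q ≠ P → Incid P L ∧ Incid Q L := fun Q => by
    by_cases h : Q = P
    · exact ⟨P, fun h' => absurd h h'⟩
    · obtain ⟨L, hL⟩ := exists_incid_line (Ne.symm h)
      exact ⟨L, fun _ => hL⟩
  choose j hj using hex
  refine ⟨A ∪ U.image j, Finset.subset_union_left, ⟨?_, ?_⟩, ?_⟩
  · exact le_trans hP (Finset.card_le_card
      (Finset.filter_subset_filter _ Finset.subset_union_left))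
  · intro Q hQ hQP
    by_cases hA : IsSing A Q
    · rcases hU Q hA hQP with ⟨L, hL, h⟩ | h
      · exact ⟨L, Finset.mem_union_left _ hL, h⟩
      · exact ⟨j Q, Finset.mem_union_right _ (Finset.mem_image_of_mem _ h), hj Q hQP⟩
    · -- `Q` is singular for `B` but not for `A`, so some added line passes through it.
      have : ∃ L ∈ A ∪ U.image j, Incid Q L ∧ L ∉ A := by
        by_contra! hcon
        exact hA (le_trans hQ (Finset.card_le_card fun L hL => by
          rw [Finset.mem_filter] at hL ⊢
          exact ⟨hcon L hL.1 hL.2, hL.2⟩))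
      obtain ⟨L, hL, hQL, hLA⟩ := this
      obtain ⟨R, hR, rfl⟩ := Finset.mem_image.1 ((Finset.mem_union.1 hL).resolve_left hLA)
      exact ⟨j R, hL, (hj R (fun h => hPU (h ▸ hR))).1, hQL⟩
  · exact (Finset.card_union_le _ _).trans (Nat.add_le_add_left Finset.card_image_le _)

/-- If `A` is an arrangement of `21` lines in `ℙ²(ℂ)` whose singular points all
have multiplicity `3` or `4`, with `t₃ = 28`, `t₄ = 21`, and with every line of `A` containing
exactly `4` triple points and exactly `4` quadruple points (the properties of the Klein
arrangement), then there is a supersolvable arrangement `B ⊇ A` with `|B| ≤ 41`; in particular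
`extSS(A) ≤ 20`. -/
theorem stmt_9 (A : Finset P2) (hcard : A.card = 21)
    (hmults : ∀ p : P2, IsSing A p → mult A p = 3 ∨ mult A p = 4)
    (ht3 : tr A 3 = 28) (ht4 : tr A 4 = 21)
    (hline : ∀ L ∈ A, ({p : P2 | mult A p = 3 ∧ Incid p L}).ncard = 4 ∧
      ({p : P2 | mult A p = 4 ∧ Incid p L}).ncard = 4) :
    (∃ B : Finset P2, A ⊆ B ∧ Supersolvable B ∧ B.card ≤ 41) ∧ extSS A ≤ 20 := by
  suffices h : ∃ B : Finset P2, A ⊆ B ∧ Supersolvable B ∧ B.card ≤ 41 by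
    refine ⟨h, ?_⟩
    obtain ⟨B, hAB, hB, hc⟩ := h
    have hle := Finset.card_le_card hAB
    have hk : extSS A ≤ B.card - A.card := Nat.sInf_le ⟨B, hAB, hB, by omega⟩
    omega
  unfold tr at ht3 ht4
  have hf3 : {p : P2 | mult A p = 3}.Finite := Set.finite_of_ncard_ne_zero (by omega)
  have hf4 : {p : P2 | mult A p = 4}.Finite := Set.finite_of_ncard_ne_zero (by omega)
  obtain ⟨P, hP⟩ : {p : P2 | mult A p = 4}.Nonempty :=
    Set.nonempty_of_ncard_ne_zero (by omega)
  have hP4 : mult A P = 4 := hP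
  set S : Finset P2 := hf3.toFinset ∪ hf4.toFinset with hS
  have memS : ∀ p, p ∈ S ↔ mult A p = 3 ∨ mult A p = 4 := fun p => by simp [hS]
  have hScard : S.card = 49 := by
    rw [hS, Finset.card_union_of_disjoint, ← Set.ncard_eq_toFinset_card _ hf3,
      ← Set.ncard_eq_toFinset_card _ hf4, ht3, ht4]
    rw [Finset.disjoint_left]
    intro p h3 h4
    simp only [Set.Finite.mem_toFinset, Set.mem_ofPred_eq] at h3 h4
    omega
  have hPS : P ∈ S := (memS P).2 (Or.inr hP4)
  have hLcard : ∀ L ∈ A, (S.filter fun p => Incid p L).card = 8 := by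
    intro L hL
    obtain ⟨h3, h4⟩ := hline L hL
    have hd : Disjoint {p : P2 | mult A p = 3 ∧ Incid p L} {p | mult A p = 4 ∧ Incid p L} := by
      rw [Set.disjoint_left]
      rintro p ⟨h, -⟩ ⟨h', -⟩
      omega
    have hu := Set.ncard_union_eq hd (hf3.subset fun p h => h.1) (hf4.subset fun p h => h.1)
    rw [h3, h4] at hu
    rw [← Set.ncard_coe_finset, show 8 = 4 + 4 from rfl, ← hu]
    congr 1
    ext p
    simp only [Finset.coe_filter, memS, Set.mem_ofPred_eq, Set.mem_union]
    tauto
  set F : Finset P2 := A.filter fun L => Incid P L with hF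
  have memF : ∀ L, L ∈ F ↔ L ∈ A ∧ Incid P L := fun L => by simp [hF]
  -- The singular points other than `P` that lines of `A` join to `P`.
  set C : Finset P2 := F.biUnion fun L => (S.filter fun p => Incid p L).erase P with hC
  have hCcard : C.card = 28 := by
    rw [hC, Finset.card_biUnion, Finset.sum_congr rfl (g := fun _ => 7)]
    · rw [Finset.sum_const, show F.card = 4 from hP4]
      rfl
    · intro L hL
      rw [memF] at hL
      rw [Finset.card_erase_of_mem (Finset.mem_filter.2 ⟨hPS, hL.2⟩), hLcard L hL.1]
    · intro L hL M hM hLM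
      rw [Finset.mem_coe, memF] at hL hM
      rw [Function.onFun, Finset.disjoint_left]
      intro p hpL hpM
      simp only [Finset.mem_erase, Finset.mem_filter] at hpL hpM
      exact hLM (incid_line_unique hpL.1 hpL.2.2 hL.2 hpM.2.2 hM.2)
  have hCS : C ⊆ S.erase P := by
    intro p hp
    simp only [hC, Finset.mem_biUnion, Finset.mem_erase, Finset.mem_filter] at hp ⊢
    tauto
  have hUcard : (S.erase P \ C).card = 20 := by
    rw [Finset.card_sdiff_of_subset hCS, Finset.card_erase_of_mem hPS, hScard, hCcard]
  obtain ⟨B, hAB, hB, hBc⟩ := exists_modular_extension A (S.erase P \ C) P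
    (by unfold IsSing; omega) (by simp) (by
      intro Q hQ hQP
      have hQS := (memS Q).2 (hmults Q hQ)
      by_cases hQC : Q ∈ C
      · left
        simp only [hC, Finset.mem_biUnion, Finset.mem_erase, Finset.mem_filter, memF] at hQC
        obtain ⟨L, ⟨hLA, hPL⟩, -, -, hQL⟩ := hQC
        exact ⟨L, hLA, hPL, hQL⟩
      · right
        simp [hQC, hQS, hQP])
  exact ⟨B, hAB, ⟨P, hB⟩, by omega⟩
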